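/- Let n ≥ 1 and 0 < α, s < 1. Let η : ℝⁿ → ℝ be a smooth function with −1 ≤ η ≤ 0, η ≡ −1 on the closed unit ball B₁(0), and η ≡ 0 outside the open ball B₂(0); let φ : ℝ → ℝ be a smooth compactly supported function with 0 ≤ φ ≤ 1, φ ≡ 1 on [−1,1], and φ ≡ 0 outside (−2,2). Set ψ(x,t) = η(x)φ(t). Then there do NOT exist constants C₁ > 0 and δ₁ > 0 such that |D_right^α ψ(x,t) + (-Δ)^s ψ(x,t)| ≤ C₁ / ((1+|x|^{n+2s+δ₁})(1+|t|^{1+α})) for all (x,t) ∈ ℝⁿ×ℝ. In other words, the spatial decay exponent n+2s in the estimate |[D_right^α + (-Δ)^s]ψ(x,t)| ≤ C/((1+|x|^{n+2s})(1+|t|^{1+α})) is optimal. -/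

import Mathlib

open MeasureTheory Set

/-- The normalization constant `C_α = 1/|Γ(-α)|` for the Marchaud fractional derivative. -/
noncomputable def Calpha (α : ℝ) : ℝ := 1 / |Real.Gamma (-α)|

/-- The normalization constant `C_{n,s} = 4^s Γ(n/2+s)/(π^{n/2}|Γ(-s)|)` for the
fractional Laplacian. -/
noncomputable def Cns (n : ℕ) (s : ℝ) : ℝ :=
  (4 : ℝ) ^ s * Real.Gamma ((n : ℝ) / 2 + s) / (Real.pi ^ ((n : ℝ) / 2) * |Real.Gamma (-s)|)

/-- The right Marchaud fractional derivative of order `α` in the time variable: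
`D_right^α φ(x,t) = C_α ∫_t^∞ (φ(x,t) - φ(x,τ))/(τ-t)^{1+α} dτ`. -/
noncomputable def marchaudRight {n : ℕ} (α : ℝ) (φ : EuclideanSpace ℝ (Fin n) × ℝ → ℝ)
    (x : EuclideanSpace ℝ (Fin n)) (t : ℝ) : ℝ :=
  Calpha α * ∫ τ in Ioi t, (φ (x, t) - φ (x, τ)) / (τ - t) ^ (1 + α)

/-- The fractional Laplacian `(-Δ)^s` acting in the space variable:
`(-Δ)^s φ(x,t) = (C_{n,s}/2) ∫_{ℝⁿ} (2φ(x,t) - φ(x+y,t) - φ(x-y,t))/|y|^{n+2s} dy`. -/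
noncomputable def fracLap {n : ℕ} (s : ℝ) (φ : EuclideanSpace ℝ (Fin n) × ℝ → ℝ)
    (x : EuclideanSpace ℝ (Fin n)) (t : ℝ) : ℝ :=
  Cns n s / 2 * ∫ y : EuclideanSpace ℝ (Fin n),
    (2 * φ (x, t) - φ (x + y, t) - φ (x - y, t)) / ‖y‖ ^ ((n : ℝ) + 2 * s)

/-- The normalization constant of the fractional Laplacian is positive. -/
lemma Cns_pos (n : ℕ) {s : ℝ} (hs0 : 0 < s) (hs1 : s < 1) : 0 < Cns n s := by
  have hΓ : Real.Gamma (-s) ≠ 0 := by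
    refine Real.Gamma_ne_zero fun m hm => ?_
    have hsm : s = m := neg_injective hm
    have h0 : (0 : ℝ) < (m : ℝ) := hsm ▸ hs0
    have h1 : (m : ℝ) < 1 := hsm ▸ hs1
    norm_cast at h0 h1
    omega
  have hnum : 0 < Real.Gamma ((n : ℝ) / 2 + s) := Real.Gamma_pos_of_pos (by positivity)
  have habs : 0 < |Real.Gamma (-s)| := abs_pos.mpr hΓ
  have hpi := Real.pi_pos
  unfold Cns
  positivity

/-- If `η` is a nonpositive cutoff equal to `-1` on the unit ball and vanishing off the ball of
radius `2`, the singular integral at a point `x` far from the origin is at least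
`|B₁| / (‖x‖ + 1) ^ p`. -/
lemma le_integral_second_difference_cutoff {n : ℕ} {p : ℝ} (hp : 0 ≤ p)
    {η : EuclideanSpace ℝ (Fin n) → ℝ} (hη_cont : Continuous η)
    (hη_range : ∀ x, -1 ≤ η x ∧ η x ≤ 0)
    (hη_ball : ∀ x, ‖x‖ ≤ 1 → η x = -1) (hη_out : ∀ x, 2 ≤ ‖x‖ → η x = 0)
    {x : EuclideanSpace ℝ (Fin n)} (hx : 3 ≤ ‖x‖) :
    volume.real (Metric.closedBall (0 : EuclideanSpace ℝ (Fin n)) 1) / (‖x‖ + 1) ^ p ≤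
      ∫ y, (2 * η x - η (x + y) - η (x - y)) / ‖y‖ ^ p := by
  have hηx : η x = 0 := hη_out x (by linarith)
  simp only [hηx, mul_zero, zero_sub]
  have hnonneg : ∀ y, 0 ≤ (-η (x + y) - η (x - y)) / ‖y‖ ^ p := fun y =>
    div_nonneg (by linarith [(hη_range (x + y)).2, (hη_range (x - y)).2]) (by positivity)
  have hbound : ∀ y, (-η (x + y) - η (x - y)) / ‖y‖ ^ p ≤
      (Metric.closedBall 0 (‖x‖ + 2)).indicator (fun _ => (2 : ℝ)) y := by
    intro y
    by_cases hfar : ‖y‖ ≤ ‖x‖ + 2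
    · rw [indicator_of_mem (by simpa using hfar)]
      by_cases hnear : 1 ≤ ‖y‖
      · have hpow : 1 ≤ ‖y‖ ^ p := Real.one_le_rpow hnear hp
        rw [div_le_iff₀ (by positivity)]
        linarith [(hη_range (x + y)).1, (hη_range (x - y)).1]
      · have h₁ : ‖x‖ - ‖y‖ ≤ ‖x + y‖ := by simpa using norm_sub_norm_le x (-y)
        have h₂ := norm_sub_norm_le x y
        rw [hη_out (x + y) (by linarith), hη_out (x - y) (by linarith)]
        simp
    · have h₁ : ‖y‖ - ‖x‖ ≤ ‖x + y‖ := by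
        simpa [add_comm] using norm_sub_norm_le y (-x)
      have h₂ : ‖y‖ - ‖x‖ ≤ ‖x - y‖ := by
        simpa [norm_sub_rev] using norm_sub_norm_le y x
      rw [hη_out (x + y) (by linarith), hη_out (x - y) (by linarith),
        indicator_of_notMem (by simpa using hfar)]
      simp
  have hmeas : Measurable fun y => (-η (x + y) - η (x - y)) / ‖y‖ ^ p := by
    have h₁ : Continuous fun y => -η (x + y) - η (x - y) := by fun_prop
    exact h₁.measurable.div (measurable_norm.pow_const p)
  have hint : Integrable fun y => (-η (x + y) - η (x - y)) / ‖y‖ ^ p := by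
    refine Integrable.mono' (g := (Metric.closedBall 0 (‖x‖ + 2)).indicator fun _ => (2 : ℝ))
      ?_ hmeas.aestronglyMeasurable (Filter.Eventually.of_forall fun y => ?_)
    · exact (integrable_indicator_iff Metric.isClosed_closedBall.measurableSet).mpr
        (integrableOn_const measure_closedBall_lt_top.ne)
    · rw [Real.norm_of_nonneg (hnonneg y)]
      exact hbound y
  calc volume.real (Metric.closedBall (0 : EuclideanSpace ℝ (Fin n)) 1) / (‖x‖ + 1) ^ p
      = ∫ y, (Metric.closedBall x 1).indicator (fun _ => 1 / (‖x‖ + 1) ^ p) y := by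
        rw [integral_indicator_const _ Metric.isClosed_closedBall.measurableSet, measureReal_def,
          measureReal_def, Measure.addHaar_closedBall_center volume x, smul_eq_mul, mul_one_div]
    _ ≤ _ := by
        refine integral_mono ((integrable_indicator_iff
          Metric.isClosed_closedBall.measurableSet).mpr
            (integrableOn_const measure_closedBall_lt_top.ne)) hint fun y => ?_
        by_cases hy : y ∈ Metric.closedBall x 1
        · have hyx : ‖x - y‖ ≤ 1 := by rwa [mem_closedBall_iff_norm, norm_sub_rev] at hy
          have hlow := norm_sub_norm_le x y
          have hupp : ‖y‖ ≤ ‖x‖ + 1 := by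
            have := norm_sub_norm_le y x
            rw [norm_sub_rev] at this
            linarith
          have hy0 : 0 < ‖y‖ := by linarith
          simp only [indicator_of_mem hy, hη_ball (x - y) hyx]
          gcongr
          all_goals linarith [(hη_range (x + y)).2]
        · rw [indicator_of_notMem hy]
          exact hnonneg y

/-- No bound `K / (R + 1) ^ p ≤ C / (1 + R ^ (p + δ))` with `K, δ > 0` holds for all large `R`. -/
lemma exists_div_rpow_lt_div_rpow {K C p δ : ℝ} (hK : 0 < K) (hC : 0 < C) (hp : 0 ≤ p)
    (hδ : 0 < δ) : ∃ R : ℝ, 3 ≤ R ∧ C / (1 + R ^ (p + δ)) < K / (R + 1) ^ p := by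
  obtain ⟨R, hR, hR3⟩ := (((tendsto_rpow_atTop hδ).eventually_gt_atTop (C * 2 ^ p / K)).and
    (Filter.eventually_ge_atTop 3)).exists
  have hR0 : 0 < R := by linarith
  refine ⟨R, hR3, ?_⟩
  rw [div_lt_div_iff₀ (by positivity) (by positivity)]
  rw [div_lt_iff₀ hK] at hR
  calc C * (R + 1) ^ p ≤ C * (2 * R) ^ p := by gcongr; linarith
    _ = C * 2 ^ p * R ^ p := by rw [Real.mul_rpow zero_le_two hR0.le, mul_assoc]
    _ < R ^ δ * K * R ^ p := by gcongr
    _ = K * R ^ (p + δ) := by rw [Real.rpow_add hR0]; ring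
    _ ≤ K * (1 + R ^ (p + δ)) := by gcongr; linarith

/-- optimality of the spatial decay exponent `n+2s`:
for the test function `ψ(x,t) = η(x)φ(t)` built from the cutoffs `η` and `φ`, there are
no constants `C₁ > 0`, `δ₁ > 0` with
`|[D_right^α + (-Δ)^s]ψ(x,t)| ≤ C₁/((1+|x|^{n+2s+δ₁})(1+|t|^{1+α}))` on all of `ℝⁿ × ℝ`. -/
theorem optimality_of_spatial_decay
    (n : ℕ) (hn : 1 ≤ n) (α s : ℝ) (hα0 : 0 < α) (hα1 : α < 1)
    (hs0 : 0 < s) (hs1 : s < 1)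
    (η : EuclideanSpace ℝ (Fin n) → ℝ) (φ : ℝ → ℝ)
    (hη_smooth : ContDiff ℝ (⊤ : ℕ∞) η) (hη_range : ∀ x, -1 ≤ η x ∧ η x ≤ 0)
    (hη_ball : ∀ x, ‖x‖ ≤ 1 → η x = -1) (hη_out : ∀ x, 2 ≤ ‖x‖ → η x = 0)
    (hφ_smooth : ContDiff ℝ (⊤ : ℕ∞) φ) (hφ_supp : HasCompactSupport φ)
    (hφ_range : ∀ t, 0 ≤ φ t ∧ φ t ≤ 1)
    (hφ_one : ∀ t ∈ Icc (-1 : ℝ) 1, φ t = 1) (hφ_out : ∀ t : ℝ, 2 ≤ |t| → φ t = 0) :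
    ¬ ∃ (C₁ : ℝ) (δ₁ : ℝ), 0 < C₁ ∧ 0 < δ₁ ∧
      ∀ (x : EuclideanSpace ℝ (Fin n)) (t : ℝ),
        |marchaudRight α (fun p => η p.1 * φ p.2) x t +
          fracLap s (fun p => η p.1 * φ p.2) x t| ≤
            C₁ / ((1 + ‖x‖ ^ ((n : ℝ) + 2 * s + δ₁)) * (1 + |t| ^ (1 + α))) := by
  rintro ⟨C, δ, hC, hδ, hbound⟩
  have hp : 0 ≤ (n : ℝ) + 2 * s := by positivity
  have hvol : 0 < volume.real (Metric.closedBall (0 : EuclideanSpace ℝ (Fin n)) 1) :=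
    ENNReal.toReal_pos (Metric.measure_closedBall_pos volume 0 one_pos).ne'
      measure_closedBall_lt_top.ne
  have hCns := Cns_pos n hs0 hs1
  obtain ⟨R, hR3, hR⟩ := exists_div_rpow_lt_div_rpow
    (mul_pos (half_pos hCns) hvol) hC hp hδ
  have hR0 : 0 ≤ R := by linarith
  let x : EuclideanSpace ℝ (Fin n) := PiLp.single 2 ⟨0, hn⟩ R
  have hx : ‖x‖ = R := by
    rw [PiLp.norm_single, Real.norm_of_nonneg hR0]
  have hηx : η x = 0 := hη_out x (by linarith)
  have hφ0 : φ 0 = 1 := hφ_one 0 (by norm_num)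
  have hlap := le_integral_second_difference_cutoff hp hη_smooth.continuous hη_range hη_ball
    hη_out (x := x) (by linarith)
  have h := hbound x 0
  simp only [marchaudRight, fracLap, hηx, hφ0, zero_mul, sub_self, zero_div, integral_zero,
    mul_zero, zero_add, mul_one, abs_zero, Real.zero_rpow (by positivity : 1 + α ≠ 0), add_zero,
    hx] at h hlap
  have hle := (le_abs_self _).trans h
  rw [mul_div_assoc] at hR
  exact absurd (hR.trans_le (mul_le_mul_of_nonneg_left hlap (half_pos hCns).le)) hle.not_gt
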